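/- There exists a universal constant C such that the following holds. Let g : ℝ^n → ℝ be a polynomial of degree at most d, where d ≥ 2. Fix parameters R ≥ 1, 0 < ε ≤ 1, 0 < β < 1, and assume 0 ≤ λ ≤ (ε/R²)·(β/d)^{C·log d}. Then for x ∼ N(0,1)^n, except with probability at most β, the zoomed polynomial g_{λ|x} is (R,ε)-attenuated; i.e., HyperVar_R[g_{λ|x}] ≤ ε·‖g_{λ|x}‖₂². -/

import Mathlib

open MeasureTheory ProbabilityTheory MvPolynomial

/-- The standard Gaussian measure `N(0,1)^n` on `ℝ^n`. -/
noncomputable def gaussianN (n : ℕ) : Measure (Fin n → ℝ) :=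
  Measure.pi fun _ => gaussianReal 0 1

/-- The normalized probabilists' Hermite polynomial `h_k = H_k / √(k!)`. -/
noncomputable def hermiteFn (k : ℕ) (t : ℝ) : ℝ :=
  ((Polynomial.hermite k).map (Int.castRingHom ℝ)).eval t / Real.sqrt (Nat.factorial k)

/-- The multivariate Hermite polynomial `h_α(x) = ∏ i, h_{α i}(x i)`. -/
noncomputable def hermiteMv {n : ℕ} (α : Fin n → ℕ) (x : Fin n → ℝ) : ℝ :=
  ∏ i, hermiteFn (α i) (x i)

/-- Hermite coefficient `f̂(α) = E_{x ∼ N(0,1)^n}[f(x)·h_α(x)]` of a function. -/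
noncomputable def hermiteCoeffF {n : ℕ} (f : (Fin n → ℝ) → ℝ) (α : Fin n → ℕ) : ℝ :=
  ∫ x, f x * hermiteMv α x ∂(gaussianN n)

/-- Hermite coefficient `ĝ(α)` of a polynomial. -/
noncomputable def hermiteCoeff {n : ℕ} (g : MvPolynomial (Fin n) ℝ) (α : Fin n → ℕ) : ℝ :=
  hermiteCoeffF (fun x => eval x g) α

/-- The squared Gaussian 2-norm `‖g‖₂² = E_{x ∼ N(0,1)^n}[g(x)²]`. -/
noncomputable def norm2sq {n : ℕ} (g : MvPolynomial (Fin n) ℝ) : ℝ :=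
  ∫ x, (eval x g) ^ 2 ∂(gaussianN n)

/-- The `λ`-zoom of `g` at `x`: `g_{λ|x}(y) = g(√(1-λ)·x + √λ·y)`, as a polynomial in `y`. -/
noncomputable def zoom {n : ℕ} (g : MvPolynomial (Fin n) ℝ) (lam : ℝ) (x : Fin n → ℝ) :
    MvPolynomial (Fin n) ℝ :=
  aeval (fun i => C (Real.sqrt (1 - lam) * x i) + C (Real.sqrt lam) * X i) g

/-- `HyperVar_R[g^{≥m}] = Σ_{|α| ≥ m} R^{2|α|}·ĝ(α)²`. -/
noncomputable def hyperVarGE {n : ℕ} (R : ℝ) (m : ℕ) (g : MvPolynomial (Fin n) ℝ) : ℝ :=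
  ∑' α : Fin n → ℕ, if m ≤ ∑ i, α i then R ^ (2 * ∑ i, α i) * hermiteCoeff g α ^ 2 else 0

/-- `HyperVar_R[g] = Σ_{α ≠ 0} R^{2|α|}·ĝ(α)²`. -/
noncomputable def hyperVar {n : ℕ} (R : ℝ) (g : MvPolynomial (Fin n) ℝ) : ℝ :=
  hyperVarGE R 1 g

/-- A nice distribution of polynomials of degree at most `d` on `ℝ^n`, indexed by
`υ ∈ ℝ^I`: each `g υ` has degree at most `d` and each coefficient of `g υ` is a
polynomial of degree at most `d` in `υ`. -/
def NiceFamily (n I d : ℕ) (g : (Fin I → ℝ) → MvPolynomial (Fin n) ℝ) : Prop :=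
  (∀ υ, (g υ).totalDegree ≤ d) ∧
  ∀ m : Fin n →₀ ℕ, ∃ P : MvPolynomial (Fin I) ℝ,
    P.totalDegree ≤ d ∧ ∀ υ, coeff m (g υ) = eval υ P

/-!
The Hermite coefficients of the zoom `g_{λ|x}` are polynomials in the base point `x`, and
differentiating in `x` raises the level: up to the factor `λ / (1 - λ)`, the weight of `g_{λ|x}` at
level `k + 1` is at most the squared gradient at `x` of its tuple of level-`k` coefficients.

A tuple of polynomials of degree at most `d` rarely has a gradient much larger than its value. For
a single polynomial `p` and an independent Gaussian direction `z`, the rotation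
`x cos θ + z sin θ` preserves the joint law of `(x, z)`, so `⟨∇p(x), z⟩ / p(x)` has the law of the
logarithmic derivative, at a uniformly random angle, of a trigonometric polynomial; having at most
`2d` zeros, it is large only near them. A tuple is first contracted with independent Gaussian
weights, and Paley–Zygmund shows that the contraction loses at most a constant.

Outside a small exceptional event the level weights of `g_{λ|x}` therefore decay geometrically, with
a ratio of order `λ` times a polynomial in `d / β`.
-/

section GaussianReal

open scoped NNReal

lemma integrable_eval_gaussianReal (m : ℝ) (v : ℝ≥0) (p : Polynomial ℝ) :
    Integrable (fun t => p.eval t) (gaussianReal m v) := by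
  induction p using Polynomial.induction_on' with
  | add p q hp hq =>
    simp only [Polynomial.eval_add]
    exact hp.add hq
  | monomial k a =>
    simp only [Polynomial.eval_monomial]
    have h := (memLp_id_gaussianReal (μ := m) (v := v) k).integrable_norm_pow'
    refine Integrable.const_mul ((integrable_norm_iff (by fun_prop)).1 ?_) a
    simpa only [norm_pow, id_eq] using h

lemma hasDerivAt_gaussianPDFReal (m : ℝ) (v : ℝ≥0) (t : ℝ) :
    HasDerivAt (gaussianPDFReal m v) (-((t - m) / v * gaussianPDFReal m v t)) t := by
  have h := ((((hasDerivAt_id t).sub_const m).pow 2).neg.div_const (2 * (v : ℝ))).exp.const_mul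
    (√(2 * Real.pi * v))⁻¹
  refine h.congr_deriv ?_
  simp only [gaussianPDFReal, id_eq, Pi.neg_apply, Pi.pow_apply, Nat.cast_ofNat,
    Nat.add_one_sub_one, pow_one, mul_one]
  ring

lemma integral_sub_mul_eval_gaussianReal (m : ℝ) {v : ℝ≥0} (p : Polynomial ℝ) :
    ∫ t, (t - m) * p.eval t ∂(gaussianReal m v) =
      v * ∫ t, p.derivative.eval t ∂(gaussianReal m v) := by
  rcases eq_or_ne v 0 with rfl | hv
  · simp
  have hint (q : Polynomial ℝ) : Integrable fun t => q.eval t * gaussianPDFReal m v t := by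
    have h := integrable_eval_gaussianReal m v q
    rw [gaussianReal_of_var_ne_zero m hv,
      integrable_withDensity_iff_integrable_smul' (measurable_gaussianPDF m v)
        (ae_of_all _ fun _ => gaussianPDF_lt_top)] at h
    simpa [toReal_gaussianPDF, mul_comm] using h
  have hparts := integral_mul_deriv_eq_deriv_mul_of_integrable
    (u := fun t => p.eval t) (v := gaussianPDFReal m v)
    (fun t _ => p.hasDerivAt t) (fun t _ => hasDerivAt_gaussianPDFReal m v t)
    (((hint (p * (Polynomial.X - Polynomial.C m))).div_const (-v)).congr
      (ae_of_all _ fun t => by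
        simp only [Pi.mul_apply, Polynomial.eval_mul, Polynomial.eval_sub, Polynomial.eval_X,
          Polynomial.eval_C]
        ring)) (hint p.derivative) (hint p)
  have hv' : (v : ℝ) ≠ 0 := by exact_mod_cast hv
  simp only [integral_gaussianReal_eq_integral_smul hv, smul_eq_mul]
  calc ∫ t, gaussianPDFReal m v t * ((t - m) * p.eval t)
      = -v * ∫ t, p.eval t * -((t - m) / v * gaussianPDFReal m v t) := by
        rw [← integral_const_mul]
        congr with t
        field_simp
    _ = v * ∫ t, gaussianPDFReal m v t * p.derivative.eval t := by
        simp only [hparts, neg_mul_neg, mul_comm (gaussianPDFReal m v _)]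

lemma integral_pow_add_two_gaussianReal (v : ℝ≥0) (k : ℕ) :
    ∫ t, t ^ (k + 2) ∂(gaussianReal 0 v) = v * ((k + 1) * ∫ t, t ^ k ∂(gaussianReal 0 v)) := by
  have h := integral_sub_mul_eval_gaussianReal 0 (v := v) (Polynomial.X ^ (k + 1))
  simp only [sub_zero, Polynomial.derivative_X_pow, Polynomial.eval_mul, Polynomial.eval_pow,
    Polynomial.eval_X, Polynomial.eval_C, Nat.add_sub_cancel, integral_const_mul,
    Nat.cast_add_one, ← pow_succ'] at h
  exact h

lemma integral_sq_gaussianReal (v : ℝ≥0) : ∫ t, t ^ 2 ∂(gaussianReal 0 v) = v := by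
  simpa using integral_pow_add_two_gaussianReal v 0

lemma integral_pow_four_gaussianReal (v : ℝ≥0) :
    ∫ t, t ^ 4 ∂(gaussianReal 0 v) = 3 * (v : ℝ) ^ 2 := by
  rw [integral_pow_add_two_gaussianReal v 2, integral_sq_gaussianReal]
  push_cast
  ring

end GaussianReal

section Hermite

/-- The normalized Hermite polynomial `hermiteFn k` as a formal polynomial. -/
noncomputable def hermitePoly (k : ℕ) : Polynomial ℝ :=
  (Polynomial.hermite k).map (Int.castRingHom ℝ) * Polynomial.C (√(Nat.factorial k))⁻¹

lemma eval_hermitePoly (k : ℕ) (t : ℝ) : (hermitePoly k).eval t = hermiteFn k t := by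
  simp [hermitePoly, hermiteFn, div_eq_mul_inv]

lemma hermitePoly_succ (k : ℕ) :
    Polynomial.C √((k : ℝ) + 1) * hermitePoly (k + 1) =
      Polynomial.X * hermitePoly k - (hermitePoly k).derivative := by
  have h : √((k : ℝ) + 1) ≠ 0 := by positivity
  have hnorm : Polynomial.C √((k : ℝ) + 1) * Polynomial.C (√((k + 1).factorial : ℝ))⁻¹ =
      Polynomial.C (√(k.factorial : ℝ))⁻¹ := by
    rw [← Polynomial.C_mul, Nat.factorial_succ]
    push_cast
    rw [Real.sqrt_mul (by positivity), mul_inv, mul_inv_cancel_left₀ h]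
  simp only [hermitePoly, Polynomial.hermite_succ, Polynomial.map_sub, Polynomial.map_mul,
    Polynomial.map_X, Polynomial.derivative_mul, Polynomial.derivative_C, Polynomial.derivative_map,
    mul_zero, add_zero]
  rw [mul_left_comm, hnorm]
  ring

lemma integrable_eval_mul_hermiteFn (p : Polynomial ℝ) (k : ℕ) :
    Integrable (fun t => p.eval t * hermiteFn k t) (gaussianReal 0 1) := by
  simpa [eval_hermitePoly] using integrable_eval_gaussianReal 0 1 (p * hermitePoly k)

lemma integral_derivative_mul_hermiteFn (p : Polynomial ℝ) (k : ℕ) :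
    ∫ t, p.derivative.eval t * hermiteFn k t ∂(gaussianReal 0 1) =
      √((k : ℝ) + 1) * ∫ t, p.eval t * hermiteFn (k + 1) t ∂(gaussianReal 0 1) := by
  have hparts := integral_sub_mul_eval_gaussianReal 0 (v := 1) (p * hermitePoly k)
  have hint := integrable_eval_gaussianReal 0 1 (p * (hermitePoly k).derivative)
  have hint' := integrable_eval_gaussianReal 0 1 (Polynomial.X * (p * hermitePoly k))
  simp only [sub_zero, Polynomial.derivative_mul, Polynomial.eval_add, Polynomial.eval_mul,
    Polynomial.eval_X, eval_hermitePoly, NNReal.coe_one, one_mul] at hparts hint hint'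
  rw [integral_add (integrable_eval_mul_hermiteFn _ _) hint] at hparts
  rw [← integral_const_mul, eq_sub_of_add_eq hparts.symm, ← integral_sub hint' hint]
  congr with t
  have hrec := congrArg (Polynomial.eval t) (hermitePoly_succ k)
  simp only [Polynomial.eval_mul, Polynomial.eval_sub, Polynomial.eval_X, Polynomial.eval_C,
    eval_hermitePoly] at hrec
  linear_combination -p.eval t * hrec

lemma integral_mul_hermiteFn_eq_zero {p : Polynomial ℝ} {k : ℕ} (h : p.natDegree < k) :
    ∫ t, p.eval t * hermiteFn k t ∂(gaussianReal 0 1) = 0 := by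
  induction k generalizing p with
  | zero => exact absurd h (Nat.not_lt_zero _)
  | succ k ih =>
    have hsqrt : √((k : ℝ) + 1) ≠ 0 := by positivity
    refine (mul_eq_zero.1 ?_).resolve_left hsqrt
    rw [← integral_derivative_mul_hermiteFn]
    rcases Nat.eq_zero_or_pos p.natDegree with h0 | hpos
    · simp [Polynomial.derivative_of_natDegree_zero h0]
    · exact ih (by have := p.natDegree_derivative_le; omega)

end Hermite

section HermiteCoefficient

variable {n : ℕ}

instance isProbabilityMeasure_gaussianN : IsProbabilityMeasure (gaussianN n) :=
  inferInstanceAs (IsProbabilityMeasure (Measure.pi _))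

lemma integrable_monomial_mul_hermiteMv (m α : Fin n → ℕ) :
    Integrable (fun x => (∏ i, x i ^ m i) * hermiteMv α x) (gaussianN n) := by
  simp only [hermiteMv, ← Finset.prod_mul_distrib]
  refine Integrable.fintype_prod (f := fun i t => t ^ m i * hermiteFn (α i) t) fun i => ?_
  simpa using integrable_eval_mul_hermiteFn (Polynomial.X ^ m i) (α i)

lemma integrable_eval_mul_hermiteMv (g : MvPolynomial (Fin n) ℝ) (α : Fin n → ℕ) :
    Integrable (fun x => eval x g * hermiteMv α x) (gaussianN n) := by
  simp only [eval_eq', Finset.sum_mul, mul_assoc]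
  exact integrable_finsetSum _ fun m _ => (integrable_monomial_mul_hermiteMv m α).const_mul _

@[simp]
lemma hermiteMv_zero (x : Fin n → ℝ) : hermiteMv 0 x = 1 := by
  simp [hermiteMv, hermiteFn]

lemma integrable_eval_gaussianN (g : MvPolynomial (Fin n) ℝ) :
    Integrable (fun x => eval x g) (gaussianN n) := by
  simpa using integrable_eval_mul_hermiteMv g 0

/-- The Hermite coefficient at `α` as a linear functional of the polynomial. -/
noncomputable def hermiteCoeffLinear (α : Fin n → ℕ) : MvPolynomial (Fin n) ℝ →ₗ[ℝ] ℝ where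
  toFun g := hermiteCoeff g α
  map_add' g h := by
    simp only [hermiteCoeff, hermiteCoeffF, map_add, add_mul]
    exact integral_add (integrable_eval_mul_hermiteMv g α) (integrable_eval_mul_hermiteMv h α)
  map_smul' c g := by
    simp only [hermiteCoeff, hermiteCoeffF, smul_eval, mul_assoc, integral_const_mul,
      RingHom.id_apply, smul_eq_mul]

@[simp]
lemma hermiteCoeffLinear_apply (α : Fin n → ℕ) (g : MvPolynomial (Fin n) ℝ) :
    hermiteCoeffLinear α g = hermiteCoeff g α := rfl

lemma hermiteCoeff_monomial (m : Fin n →₀ ℕ) (c : ℝ) (α : Fin n → ℕ) :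
    hermiteCoeff (monomial m c) α =
      c * ∏ i, ∫ t, t ^ m i * hermiteFn (α i) t ∂(gaussianReal 0 1) := by
  have heval (x : Fin n → ℝ) : eval x (monomial m c) * hermiteMv α x =
      c * ∏ i, x i ^ m i * hermiteFn (α i) (x i) := by
    rw [eval_monomial, Finsupp.prod_fintype _ _ fun i => pow_zero _, hermiteMv, mul_assoc,
      Finset.prod_mul_distrib]
  simp only [hermiteCoeff, hermiteCoeffF, heval, integral_const_mul, gaussianN]
  rw [integral_fintype_prod_eq_prod (fun i (t : ℝ) => t ^ m i * hermiteFn (α i) t)]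

lemma hermiteCoeff_pderiv (g : MvPolynomial (Fin n) ℝ) (α : Fin n → ℕ) (i : Fin n) :
    hermiteCoeff (pderiv i g) α =
      √((α i : ℝ) + 1) * hermiteCoeff g (α + Pi.single i 1) := by
  induction g using MvPolynomial.induction_on' with
  | add p q hp hq =>
    simp only [← hermiteCoeffLinear_apply, map_add, mul_add] at hp hq ⊢
    rw [hp, hq]
  | monomial m c =>
    have hi := integral_derivative_mul_hermiteFn (Polynomial.X ^ m i) (α i)
    simp only [Polynomial.derivative_X_pow, Polynomial.eval_mul, Polynomial.eval_C,
      Polynomial.eval_pow, Polynomial.eval_X, mul_assoc, integral_const_mul] at hi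
    have hne {j : Fin n} (hj : j ∈ Finset.univ.erase i) : j ≠ i := Finset.ne_of_mem_erase hj
    rw [pderiv_monomial, hermiteCoeff_monomial, hermiteCoeff_monomial,
      ← Finset.mul_prod_erase _ _ (Finset.mem_univ i),
      ← Finset.mul_prod_erase _ _ (Finset.mem_univ i)]
    have hrest : ∏ j ∈ Finset.univ.erase i,
        ∫ t, t ^ (m - Finsupp.single i 1 : Fin n →₀ ℕ) j * hermiteFn (α j) t ∂(gaussianReal 0 1) =
      ∏ j ∈ Finset.univ.erase i,
        ∫ t, t ^ m j * hermiteFn ((α + Pi.single i 1 : Fin n → ℕ) j) t ∂(gaussianReal 0 1) :=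
      Finset.prod_congr rfl fun j hj => by simp [hne hj]
    rw [hrest]
    simp only [Finsupp.coe_tsub, Pi.sub_apply, Finsupp.single_eq_same, Pi.add_apply,
      Pi.single_eq_same]
    linear_combination c * (∏ j ∈ Finset.univ.erase i, ∫ t,
      t ^ m j * hermiteFn ((α + Pi.single i 1 : Fin n → ℕ) j) t ∂(gaussianReal 0 1)) * hi

lemma hermiteCoeff_eq_zero_of_totalDegree_lt {g : MvPolynomial (Fin n) ℝ} {α : Fin n → ℕ}
    (h : g.totalDegree < ∑ i, α i) : hermiteCoeff g α = 0 := by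
  rw [← hermiteCoeffLinear_apply, g.as_sum, map_sum]
  refine Finset.sum_eq_zero fun m hm => ?_
  have hlt : ∑ i, m i < ∑ i, α i := by
    rw [← Finsupp.degree_eq_sum]
    exact (le_totalDegree hm).trans_lt h
  obtain ⟨i, -, hi⟩ := Finset.exists_lt_of_sum_lt hlt
  rw [hermiteCoeffLinear_apply, hermiteCoeff_monomial, Finset.prod_eq_zero (Finset.mem_univ i),
    mul_zero]
  simpa using integral_mul_hermiteFn_eq_zero (p := Polynomial.X ^ m i) (by simpa using hi)

end HermiteCoefficient

section MapCoeff

variable {R A σ : Type*} [CommSemiring R] [CommSemiring A] [Algebra R A]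

/-- The polynomial obtained by applying a linear functional to each coefficient. It turns a
polynomial in `x` with coefficients in a space of functions of `y` into a polynomial in `x`. -/
noncomputable def mapCoeff (Λ : A →ₗ[R] R) (P : MvPolynomial σ A) : MvPolynomial σ R :=
  AddMonoidAlgebra.map (Λ : A →+ R) P

lemma coeff_mapCoeff (Λ : A →ₗ[R] R) (P : MvPolynomial σ A) (m : σ →₀ ℕ) :
    coeff m (mapCoeff Λ P) = Λ (coeff m P) :=
  coeff_addMonoidAlgebraMap (Λ : A →+ R) P m

lemma support_mapCoeff_subset (Λ : A →ₗ[R] R) (P : MvPolynomial σ A) :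
    (mapCoeff Λ P).support ⊆ P.support := fun m hm => by
  rw [mem_support_iff, coeff_mapCoeff] at hm
  exact mem_support_iff.2 fun h => hm (by rw [h, map_zero])

lemma totalDegree_mapCoeff_le (Λ : A →ₗ[R] R) (P : MvPolynomial σ A) :
    (mapCoeff Λ P).totalDegree ≤ P.totalDegree :=
  Finset.sup_mono (support_mapCoeff_subset Λ P)

lemma eval_mapCoeff (Λ : A →ₗ[R] R) (P : MvPolynomial σ A) (x : σ → R) :
    eval x (mapCoeff Λ P) = Λ (eval (fun i => algebraMap R A (x i)) P) := by
  rw [eval_eq, eval_eq, map_sum, Finset.sum_subset (support_mapCoeff_subset Λ P)]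
  · refine Finset.sum_congr rfl fun m _ => ?_
    simp only [← map_pow, ← map_prod]
    rw [coeff_mapCoeff, mul_comm (coeff m P), ← Algebra.smul_def, map_smul, smul_eq_mul, mul_comm]
  · intro m _ hm
    rw [notMem_support_iff.1 hm, zero_mul]

lemma pderiv_mapCoeff (Λ : A →ₗ[R] R) (P : MvPolynomial σ A) (i : σ) :
    pderiv i (mapCoeff Λ P) = mapCoeff Λ (pderiv i P) := by
  ext m
  have h : ((m i : A) + 1) = algebraMap R A (m i + 1) := by simp
  rw [coeff_pderiv, coeff_mapCoeff, coeff_mapCoeff, coeff_pderiv, h, mul_comm (coeff _ _),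
    ← Algebra.smul_def, map_smul, smul_eq_mul, mul_comm]

end MapCoeff

section ChainRule

variable {R A σ : Type*} [CommSemiring R] [CommSemiring A] [Algebra R A]

lemma derivation_aeval_of_eq_single [DecidableEq σ] (D : Derivation R A A) {f : σ → A} {i : σ}
    {c : A} (hf : ∀ j, D (f j) = c * Pi.single (M := fun _ => A) i 1 j) (g : MvPolynomial σ R) :
    D (aeval f g) = c * aeval f (pderiv i g) := by
  induction g using MvPolynomial.induction_on with
  | C r => simp
  | add p q hp hq => simp only [map_add, mul_add, hp, hq]
  | mul_X p j hp =>
    rw [map_mul, aeval_X, D.leibniz, hf, hp, pderiv_mul, pderiv_X]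
    rcases eq_or_ne j i with rfl | hj
    · simp only [Pi.single_eq_same, mul_one, smul_eq_mul, map_add, map_mul, aeval_X]
      ring
    · simp only [ne_eq, hj, not_false_eq_true, Pi.single_eq_of_ne, mul_zero, smul_eq_mul, zero_add,
        add_zero, map_mul, aeval_X]
      ring

lemma totalDegree_aeval_le {τ : Type*} {f : σ → MvPolynomial τ A}
    (hf : ∀ j, (f j).totalDegree ≤ 1) (g : MvPolynomial σ R) :
    (aeval f g).totalDegree ≤ g.totalDegree := by
  rw [aeval_def, eval₂_eq]
  refine totalDegree_finsetSum_le fun m hm => ?_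
  rw [IsScalarTower.algebraMap_apply R A, algebraMap_eq]
  refine (totalDegree_mul _ _).trans ?_
  rw [totalDegree_C, zero_add]
  refine (totalDegree_finsetProd _ _).trans (le_trans ?_ (le_totalDegree hm))
  refine Finset.sum_le_sum fun j _ => (totalDegree_pow _ _).trans ?_
  simpa using Nat.mul_le_mul_left (m j) (hf j)

end ChainRule

section Zoom

variable {n : ℕ}

/-- The zoom with its base point as a second block of variables: a polynomial in `x` whose
coefficients are polynomials in `y`, with value `g (√(1-λ) x + √λ y)`. -/
noncomputable def zoomPoly (g : MvPolynomial (Fin n) ℝ) (lam : ℝ) :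
    MvPolynomial (Fin n) (MvPolynomial (Fin n) ℝ) :=
  aeval (fun i => C (C √(1 - lam)) * X i + C (C √lam * X i)) g

lemma eval_zoomPoly (g : MvPolynomial (Fin n) ℝ) (lam : ℝ) (x : Fin n → ℝ) :
    eval (fun i => C (x i)) (zoomPoly g lam) = zoom g lam x := by
  induction g using MvPolynomial.induction_on with
  | C r => simp [zoomPoly, zoom, MvPolynomial.algebraMap_apply]
  | add p q hp hq => simp_all [zoomPoly, zoom]
  | mul_X p i hp => simp_all [zoomPoly, zoom]

lemma pderiv_zoomPoly (g : MvPolynomial (Fin n) ℝ) (lam : ℝ) (i : Fin n) :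
    pderiv i (zoomPoly g lam) = C (C √(1 - lam)) * zoomPoly (pderiv i g) lam := by
  refine derivation_aeval_of_eq_single ((pderiv i).restrictScalars ℝ) (fun j => ?_) g
  rw [Derivation.coe_restrictScalars, map_add, pderiv_C, add_zero, pderiv_C_mul, pderiv_X]

lemma pderiv_zoom (g : MvPolynomial (Fin n) ℝ) (lam : ℝ) (x : Fin n → ℝ) (i : Fin n) :
    pderiv i (zoom g lam x) = C √lam * zoom (pderiv i g) lam x := by
  refine derivation_aeval_of_eq_single (pderiv i) (fun j => ?_) g
  rw [map_add, pderiv_C, zero_add, pderiv_C_mul, pderiv_X]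

lemma totalDegree_zoom_le (g : MvPolynomial (Fin n) ℝ) (lam : ℝ) (x : Fin n → ℝ) :
    (zoom g lam x).totalDegree ≤ g.totalDegree := by
  refine totalDegree_aeval_le (fun i => ?_) g
  exact (totalDegree_add _ _).trans (max_le ((totalDegree_C _).le.trans zero_le_one)
    ((totalDegree_mul _ _).trans (by simp)))

lemma totalDegree_zoomPoly_le (g : MvPolynomial (Fin n) ℝ) (lam : ℝ) :
    (zoomPoly g lam).totalDegree ≤ g.totalDegree := by
  refine totalDegree_aeval_le (fun i => ?_) g
  exact (totalDegree_add _ _).trans (max_le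
    ((totalDegree_mul _ _).trans (by simp)) ((totalDegree_C _).le.trans zero_le_one))

/-- The Hermite coefficient at `α` of the zoom of `g` at `x`, as a polynomial in `x`. -/
noncomputable def zoomCoeff (g : MvPolynomial (Fin n) ℝ) (lam : ℝ) (α : Fin n → ℕ) :
    MvPolynomial (Fin n) ℝ :=
  mapCoeff (hermiteCoeffLinear α) (zoomPoly g lam)

lemma totalDegree_zoomCoeff_le (g : MvPolynomial (Fin n) ℝ) (lam : ℝ) (α : Fin n → ℕ) :
    (zoomCoeff g lam α).totalDegree ≤ g.totalDegree :=
  (totalDegree_mapCoeff_le _ _).trans (totalDegree_zoomPoly_le g lam)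

lemma eval_zoomCoeff (g : MvPolynomial (Fin n) ℝ) (lam : ℝ) (α : Fin n → ℕ) (x : Fin n → ℝ) :
    eval x (zoomCoeff g lam α) = hermiteCoeff (zoom g lam x) α := by
  rw [zoomCoeff, eval_mapCoeff, algebraMap_eq, eval_zoomPoly, hermiteCoeffLinear_apply]

lemma eval_pderiv_zoomCoeff (g : MvPolynomial (Fin n) ℝ) (lam : ℝ) (α : Fin n → ℕ)
    (x : Fin n → ℝ) (i : Fin n) :
    eval x (pderiv i (zoomCoeff g lam α)) =
      √(1 - lam) * hermiteCoeff (zoom (pderiv i g) lam x) α := by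
  rw [zoomCoeff, pderiv_mapCoeff, eval_mapCoeff, pderiv_zoomPoly, map_mul, eval_C, algebraMap_eq,
    eval_zoomPoly, C_mul', map_smul, hermiteCoeffLinear_apply, smul_eq_mul]

lemma sqrt_mul_eval_pderiv_zoomCoeff (g : MvPolynomial (Fin n) ℝ) (lam : ℝ) (α : Fin n → ℕ)
    (x : Fin n → ℝ) (i : Fin n) :
    √lam * eval x (pderiv i (zoomCoeff g lam α)) =
      √(1 - lam) * hermiteCoeff (pderiv i (zoom g lam x)) α := by
  rw [eval_pderiv_zoomCoeff, pderiv_zoom, C_mul', ← hermiteCoeffLinear_apply α (_ • _), map_smul,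
    hermiteCoeffLinear_apply, smul_eq_mul, mul_left_comm]

end Zoom

section HermiteWeight

lemma sum_piAntidiag_succ_le {ι : Type*} [Fintype ι] [DecidableEq ι] {f : (ι → ℕ) → ℝ}
    (hf : 0 ≤ f) (k : ℕ) :
    ∑ α ∈ Finset.piAntidiag Finset.univ (k + 1), f α ≤
      ∑ α ∈ Finset.piAntidiag Finset.univ k, ∑ i, f (α + Pi.single i 1) := by
  have hsub : Finset.piAntidiag Finset.univ (k + 1) ⊆
      (Finset.piAntidiag Finset.univ k ×ˢ Finset.univ).image
        fun p : (ι → ℕ) × ι => p.1 + Pi.single p.2 1 := by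
    intro α hα
    have hsum : ∑ i, α i = k + 1 := (Finset.mem_piAntidiag.1 hα).1
    obtain ⟨i, -, hi⟩ := Finset.exists_ne_zero_of_sum_ne_zero (hsum.trans_ne k.succ_ne_zero)
    have hle : Pi.single i 1 ≤ α := fun j => by
      rcases eq_or_ne j i with rfl | hj
      · simpa using Nat.one_le_iff_ne_zero.2 hi
      · simp [hj]
    have hadd : α - Pi.single i 1 + Pi.single i 1 = α := tsub_add_cancel_of_le hle
    refine Finset.mem_image.2 ⟨(α - Pi.single i 1, i), ?_, hadd⟩
    have hsum' := congrArg (fun γ : ι → ℕ => ∑ j, γ j) hadd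
    simp only [Pi.add_apply, Finset.sum_add_distrib, Finset.sum_pi_single', Finset.mem_univ,
      if_true, hsum] at hsum'
    simpa using hsum'
  calc ∑ α ∈ Finset.piAntidiag Finset.univ (k + 1), f α
      ≤ ∑ α ∈ (Finset.piAntidiag Finset.univ k ×ˢ Finset.univ).image
          fun p : (ι → ℕ) × ι => p.1 + Pi.single p.2 1, f α :=
        Finset.sum_le_sum_of_subset_of_nonneg hsub fun α _ _ => hf α
    _ ≤ ∑ p ∈ Finset.piAntidiag Finset.univ k ×ˢ Finset.univ, f (p.1 + Pi.single p.2 1) :=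
        Finset.sum_image_le_of_nonneg fun α _ => hf α
    _ = _ := Finset.sum_product _ _ _

variable {n : ℕ}

/-- The Hermite weight `Σ_{|α| = k} ĝ(α)²` of `g` at level `k`. -/
noncomputable def hermiteWeight (g : MvPolynomial (Fin n) ℝ) (k : ℕ) : ℝ :=
  ∑ α ∈ Finset.piAntidiag Finset.univ k, hermiteCoeff g α ^ 2

lemma hermiteWeight_nonneg (g : MvPolynomial (Fin n) ℝ) (k : ℕ) : 0 ≤ hermiteWeight g k :=
  Finset.sum_nonneg fun _ _ => sq_nonneg _

lemma hermiteWeight_succ_le (g : MvPolynomial (Fin n) ℝ) (k : ℕ) :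
    hermiteWeight g (k + 1) ≤
      ∑ α ∈ Finset.piAntidiag Finset.univ k, ∑ i, hermiteCoeff (pderiv i g) α ^ 2 := by
  refine (sum_piAntidiag_succ_le (fun α => sq_nonneg (hermiteCoeff g α)) k).trans ?_
  refine Finset.sum_le_sum fun α _ => Finset.sum_le_sum fun i _ => ?_
  rw [hermiteCoeff_pderiv, mul_pow, Real.sq_sqrt (by positivity)]
  exact le_mul_of_one_le_left (sq_nonneg _) (by simp)

lemma one_sub_mul_hermiteWeight_zoom_succ_le (g : MvPolynomial (Fin n) ℝ) {lam : ℝ}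
    (h0 : 0 ≤ lam) (h1 : lam ≤ 1) (x : Fin n → ℝ) (k : ℕ) :
    (1 - lam) * hermiteWeight (zoom g lam x) (k + 1) ≤
      lam * ∑ α ∈ Finset.piAntidiag Finset.univ k,
        ∑ i, eval x (pderiv i (zoomCoeff g lam α)) ^ 2 := by
  refine (mul_le_mul_of_nonneg_left (hermiteWeight_succ_le _ k) (sub_nonneg.2 h1)).trans_eq ?_
  simp only [Finset.mul_sum]
  refine Finset.sum_congr rfl fun α _ => Finset.sum_congr rfl fun i _ => ?_
  have h := congrArg (· ^ 2) (sqrt_mul_eval_pderiv_zoomCoeff g lam α x i)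
  simp only [mul_pow, Real.sq_sqrt h0, Real.sq_sqrt (sub_nonneg.2 h1)] at h
  exact h.symm

lemma hyperVar_eq_sum_hermiteWeight {g : MvPolynomial (Fin n) ℝ} {d : ℕ} (hg : g.totalDegree ≤ d)
    (R : ℝ) :
    hyperVar R g = ∑ k ∈ Finset.range d, R ^ (2 * (k + 1)) * hermiteWeight g (k + 1) := by
  have hdisj : Set.PairwiseDisjoint (Finset.range d : Set ℕ) fun k =>
      Finset.piAntidiag (Finset.univ : Finset (Fin n)) (k + 1) := fun k _ l _ hkl =>
    Finset.disjoint_left.2 fun α hα hα' => by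
      rw [Finset.mem_piAntidiag] at hα hα'
      omega
  rw [hyperVar, hyperVarGE, tsum_eq_sum (s := (Finset.range d).biUnion fun k =>
    Finset.piAntidiag Finset.univ (k + 1)), Finset.sum_biUnion hdisj]
  · refine Finset.sum_congr rfl fun k _ => ?_
    rw [hermiteWeight, Finset.mul_sum]
    refine Finset.sum_congr rfl fun α hα => ?_
    rw [(Finset.mem_piAntidiag.1 hα).1, if_pos (Nat.le_add_left 1 k)]
  · intro α hα
    simp only [Finset.mem_biUnion, Finset.mem_range, Finset.mem_piAntidiag, Finset.mem_univ,
      implies_true, and_true, not_exists, not_and] at hα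
    split_ifs with h
    · have hlt : d < ∑ i, α i := by
        by_contra! hle
        exact hα (∑ i, α i - 1) (by omega) (Nat.sub_add_cancel h).symm
      rw [hermiteCoeff_eq_zero_of_totalDegree_lt (hg.trans_lt hlt)]
      simp
    · rfl

lemma hermiteWeight_zero_le_norm2sq (g : MvPolynomial (Fin n) ℝ) :
    hermiteWeight g 0 ≤ norm2sq g := by
  have hmean : hermiteWeight g 0 = (∫ x, eval x g ∂(gaussianN n)) ^ 2 := by
    simp [hermiteWeight, hermiteCoeff, hermiteCoeffF]
  have hsq : Integrable (fun x => eval x g ^ 2) (gaussianN n) :=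
    (integrable_eval_gaussianN (g ^ 2)).congr (ae_of_all _ fun x => map_pow (eval x) g 2)
  rw [hmean, norm2sq]
  exact (even_two.convexOn_pow (n := 2)).map_integral_le (by fun_prop) isClosed_univ (by simp)
    (integrable_eval_gaussianN g) hsq

end HermiteWeight

section MeasureInequalities

variable {Ω : Type*} [MeasurableSpace Ω] {μ : Measure Ω}

lemma sq_integral_le_measureReal_univ_mul_integral_sq [IsFiniteMeasure μ] {Z : Ω → ℝ}
    (hZ : MemLp Z 2 μ) : (∫ ω, Z ω ∂μ) ^ 2 ≤ μ.real Set.univ * ∫ ω, Z ω ^ 2 ∂μ := by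
  have hquad (t : ℝ) : 0 ≤ μ.real Set.univ * (t * t) + -2 * (∫ ω, Z ω ∂μ) * t +
      ∫ ω, Z ω ^ 2 ∂μ := by
    have hZ1 : Integrable Z μ := hZ.integrable one_le_two
    have hlin : Integrable (fun ω => t * t - 2 * t * Z ω) μ := by fun_prop
    calc 0 ≤ ∫ ω, (t * t - 2 * t * Z ω + Z ω ^ 2) ∂μ :=
          integral_nonneg fun ω => by
            rw [Pi.zero_apply]
            nlinarith [sq_nonneg (t - Z ω)]
      _ = _ := by
          rw [integral_add hlin hZ.integrable_sq,
            integral_sub (integrable_const _) (hZ1.const_mul _), integral_const,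
            integral_const_mul, smul_eq_mul]
          ring
  have h := discrim_le_zero hquad
  rw [discrim] at h
  linarith

lemma paley_zygmund [IsProbabilityMeasure μ] {Z : Ω → ℝ} (hZ : MemLp Z 2 μ)
    (hmean : 0 ≤ ∫ ω, Z ω ∂μ) {θ : ℝ} (h0 : 0 ≤ θ) (h1 : θ ≤ 1) :
    (1 - θ) ^ 2 * (∫ ω, Z ω ∂μ) ^ 2 ≤
      μ.real {ω | θ * ∫ ω, Z ω ∂μ < Z ω} * ∫ ω, Z ω ^ 2 ∂μ := by
  set m := ∫ ω, Z ω ∂μ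
  set S := {ω | θ * m < Z ω}
  have hS : NullMeasurableSet S μ := nullMeasurableSet_lt aemeasurable_const hZ.aemeasurable
  have hZ1 : Integrable Z μ := hZ.integrable one_le_two
  have hlarge : (1 - θ) * m ≤ ∫ ω in S, Z ω ∂μ := by
    have hsmall : m ≤ ∫ ω, (θ * m + S.indicator Z ω) ∂μ := by
      refine integral_mono hZ1 ((integrable_const _).add (hZ1.indicator₀ hS)) fun ω => ?_
      by_cases hω : ω ∈ S
      · simpa [hω] using mul_nonneg h0 hmean
      · simpa [hω] using not_lt.1 hω
    rw [integral_add (integrable_const _) (hZ1.indicator₀ hS), integral_indicator₀ hS,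
      integral_const, probReal_univ, one_smul] at hsmall
    linarith
  calc (1 - θ) ^ 2 * m ^ 2 = ((1 - θ) * m) ^ 2 := (mul_pow _ _ 2).symm
    _ ≤ (∫ ω in S, Z ω ∂μ) ^ 2 :=
        pow_le_pow_left₀ (mul_nonneg (sub_nonneg.2 h1) hmean) hlarge 2
    _ ≤ μ.real S * ∫ ω in S, Z ω ^ 2 ∂μ := by
        simpa using sq_integral_le_measureReal_univ_mul_integral_sq (hZ.restrict S)
    _ ≤ μ.real S * ∫ ω, Z ω ^ 2 ∂μ :=
        mul_le_mul_of_nonneg_left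
          (setIntegral_le_integral hZ.integrable_sq (ae_of_all _ fun ω => sq_nonneg (Z ω)))
          measureReal_nonneg

lemma one_div_twelve_le_measureReal_half_integral_lt [IsProbabilityMeasure μ] {Z : Ω → ℝ}
    (hZ : MemLp Z 2 μ) (hmean : 0 < ∫ ω, Z ω ∂μ)
    (hsq : ∫ ω, Z ω ^ 2 ∂μ ≤ 3 * (∫ ω, Z ω ∂μ) ^ 2) :
    1 / 12 ≤ μ.real {ω | (∫ ω, Z ω ∂μ) / 2 < Z ω} := by
  have h := (paley_zygmund hZ hmean.le (θ := 1 / 2) (by norm_num) (by norm_num)).trans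
    (mul_le_mul_of_nonneg_left hsq measureReal_nonneg)
  simp only [one_div_mul_eq_div] at h
  refine le_of_mul_le_mul_right ?_ (pow_pos hmean 2)
  linarith

lemma sq_lpNorm_two {Z : Ω → ℝ} (hZ : MemLp Z 2 μ) : lpNorm Z 2 μ ^ 2 = ∫ ω, Z ω ^ 2 ∂μ := by
  rw [lpNorm_eq_integral_norm_rpow_toReal two_ne_zero ENNReal.ofNat_ne_top hZ.1]
  simp only [ENNReal.toReal_ofNat, Real.rpow_two, Real.norm_eq_abs, sq_abs]
  rw [inv_eq_one_div, ← Real.sqrt_eq_rpow, Real.sq_sqrt (integral_nonneg fun ω => sq_nonneg (Z ω))]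

lemma integral_sq_finsetSum_le {κ : Type*} {s : Finset κ} {Z : κ → Ω → ℝ} {K : ℝ} {c : κ → ℝ}
    (hZ : ∀ k ∈ s, MemLp (Z k) 2 μ) (hK : 0 ≤ K) (hc : ∀ k ∈ s, 0 ≤ c k)
    (h : ∀ k ∈ s, ∫ ω, Z k ω ^ 2 ∂μ ≤ K * c k ^ 2) :
    ∫ ω, (∑ k ∈ s, Z k ω) ^ 2 ∂μ ≤ K * (∑ k ∈ s, c k) ^ 2 := by
  have hnorm (k : κ) (hk : k ∈ s) : lpNorm (Z k) 2 μ ≤ √K * c k := by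
    refine le_of_sq_le_sq ?_ (mul_nonneg (Real.sqrt_nonneg K) (hc k hk))
    rw [sq_lpNorm_two (hZ k hk), mul_pow, Real.sq_sqrt hK]
    exact h k hk
  calc ∫ ω, (∑ k ∈ s, Z k ω) ^ 2 ∂μ = lpNorm (∑ k ∈ s, Z k) 2 μ ^ 2 := by
        rw [sq_lpNorm_two (memLp_finsetSum' _ hZ)]
        simp only [Finset.sum_apply]
    _ ≤ (∑ k ∈ s, √K * c k) ^ 2 :=
        pow_le_pow_left₀ lpNorm_nonneg
          ((lpNorm_sum_le hZ one_le_two).trans (Finset.sum_le_sum hnorm)) 2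
    _ = K * (∑ k ∈ s, c k) ^ 2 := by rw [← Finset.mul_sum, mul_pow, Real.sq_sqrt hK]

lemma measureReal_mul_integral_lt_le [IsFiniteMeasure μ] {Z : Ω → ℝ} (hZ : 0 ≤ Z)
    (hint : Integrable Z μ) {c : ℝ} (hc : 0 < c) :
    μ.real {ω | c * ∫ ω, Z ω ∂μ < Z ω} ≤ 1 / c := by
  rcases (integral_nonneg hZ).eq_or_lt with h0 | hpos
  · have hae : Z =ᵐ[μ] 0 := (integral_eq_zero_iff_of_nonneg hZ hint).1 h0.symm
    have hnull : μ.real {ω | c * ∫ ω, Z ω ∂μ < Z ω} = 0 := by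
      rw [← h0, mul_zero, measureReal_eq_zero_iff, ← nonpos_iff_eq_zero,
        ← (ae_iff.1 hae : μ {ω | ¬ Z ω = 0} = 0)]
      exact measure_mono fun ω hω => (show 0 < Z ω from hω).ne'
    rw [hnull]
    positivity
  · have h := mul_meas_ge_le_integral_of_nonneg (ae_of_all _ hZ) hint (c * ∫ ω, Z ω ∂μ)
    rw [mul_right_comm] at h
    have hle := le_of_mul_le_mul_right (h.trans_eq (one_mul _).symm) hpos
    rw [le_div_iff₀' hc]
    exact hle.trans' (mul_le_mul_of_nonneg_left
      (measureReal_mono (Set.ofPred_subset_ofPred.2 fun ω => le_of_lt)) hc.le)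

variable {Ω' : Type*} [MeasurableSpace Ω']

lemma mul_measure_le_prod (μ : Measure Ω) (ν : Measure Ω') [SFinite ν] {S : Set (Ω × Ω')}
    (hS : MeasurableSet S) {G : Set Ω} {c : ENNReal} (h : ∀ ω ∈ G, c ≤ ν (Prod.mk ω ⁻¹' S)) :
    c * μ G ≤ μ.prod ν S := by
  rw [Measure.prod_apply hS]
  exact (mul_le_mul_right (measure_mono h) c).trans
    (mul_meas_ge_le_lintegral (measurable_measure_prodMk_left hS) c)

lemma measure_le_of_forall_measure_orbit_le {Θ : Type*} [MeasurableSpace Θ] (V : Measure Θ)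
    [IsProbabilityMeasure V] [IsProbabilityMeasure μ] {T : Θ → Ω → Ω}
    (hT : Measurable (Function.uncurry T)) (hμ : ∀ θ, μ.map (T θ) = μ) {S : Set Ω}
    (hS : MeasurableSet S) {c : ENNReal} (h : ∀ ω, V {θ | T θ ω ∈ S} ≤ c) : μ S ≤ c := by
  have hpre := hS.preimage hT
  have hinv (θ : Θ) : μ (Prod.mk θ ⁻¹' (Function.uncurry T ⁻¹' S)) = μ S :=
    (Measure.map_apply hT.of_uncurry_left hS).symm.trans (by rw [hμ])
  calc μ S = V.prod μ (Function.uncurry T ⁻¹' S) := by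
        simp [Measure.prod_apply hpre, hinv]
    _ = ∫⁻ ω, V {θ | T θ ω ∈ S} ∂μ := Measure.prod_apply_symm hpre
    _ ≤ ∫⁻ _, c ∂μ := lintegral_mono h
    _ = c := by simp

lemma prod_prod_le_of_forall_prod_le {Ω'' : Type*} [MeasurableSpace Ω''] (μ : Measure Ω)
    (ν : Measure Ω') (ρ : Measure Ω'') [SFinite μ] [IsProbabilityMeasure ν] [SFinite ρ]
    {S : Set (Ω × Ω' × Ω'')} (hS : MeasurableSet S) {c : ENNReal}
    (h : ∀ z, μ.prod ρ {p | (p.1, z, p.2) ∈ S} ≤ c) : μ.prod (ν.prod ρ) S ≤ c := by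
  have hS' : MeasurableSet {r : (Ω × Ω') × Ω'' | (r.1.1, r.1.2, r.2) ∈ S} :=
    hS.preimage (by fun_prop)
  calc μ.prod (ν.prod ρ) S = ∫⁻ x, ∫⁻ z, ρ {y | (x, z, y) ∈ S} ∂ν ∂μ := by
        rw [Measure.prod_apply hS]
        exact lintegral_congr fun x => Measure.prod_apply (hS.preimage measurable_prodMk_left)
    _ = ∫⁻ z, ∫⁻ x, ρ {y | (x, z, y) ∈ S} ∂μ ∂ν :=
        lintegral_lintegral_swap (measurable_measure_prodMk_left hS').aemeasurable
    _ = ∫⁻ z, μ.prod ρ {p | (p.1, z, p.2) ∈ S} ∂ν :=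
        lintegral_congr fun z => (Measure.prod_apply (hS.preimage
          (f := fun p : Ω × Ω'' => (p.1, z, p.2)) (by fun_prop))).symm
    _ ≤ ∫⁻ _, c ∂ν := lintegral_mono h
    _ = c := by simp

end MeasureInequalities

section StdGaussianPi

open scoped Matrix

variable {ι κ : Type*} [Fintype ι] [Fintype κ]

/-- The standard Gaussian measure on `ι → ℝ`; `gaussianN n` is the case `ι = Fin n`. -/
noncomputable abbrev stdGaussianPi (ι : Type*) [Fintype ι] : Measure (ι → ℝ) :=
  Measure.pi fun _ => gaussianReal 0 1

instance isGaussian_stdGaussianPi : IsGaussian (stdGaussianPi ι) := by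
  have hlaw : stdGaussianPi ι =
      (stdGaussian (EuclideanSpace ℝ ι)).map (PiLp.continuousLinearEquiv 2 ℝ fun _ : ι => ℝ) := by
    rw [← map_pi_eq_stdGaussian, Measure.map_map (by fun_prop) (by fun_prop)]
    exact Measure.map_id.symm
  rw [hlaw]
  infer_instance

lemma map_dotProduct_stdGaussianPi (a : ι → ℝ) :
    (stdGaussianPi ι).map (a ⬝ᵥ ·) = gaussianReal 0 (∑ i, a i ^ 2).toNNReal := by
  have hinner : (a ⬝ᵥ ·) = innerSL ℝ (WithLp.toLp 2 a) ∘ WithLp.toLp 2 := by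
    ext z
    simp [EuclideanSpace.inner_toLp_toLp, dotProduct_comm]
  rw [hinner, ← Measure.map_map (by fun_prop) (by fun_prop), map_pi_eq_stdGaussian,
    IsGaussian.map_eq_gaussianReal, integral_strongDual_stdGaussian, variance_dual_stdGaussian,
    innerSL_apply_norm, EuclideanSpace.real_norm_sq_eq]

lemma map_rotation_stdGaussianPi (θ : ℝ) :
    ((stdGaussianPi ι).prod (stdGaussianPi ι)).map (ContinuousLinearMap.rotation θ) =
      (stdGaussianPi ι).prod (stdGaussianPi ι) := by
  refine IsGaussian.map_rotation_eq_self_of_forall_strongDual_eq_zero (fun L => ?_) θ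
  have hmean : ∫ z, z ∂(stdGaussianPi ι) = 0 := by
    ext i
    rw [eval_integral fun i => IsGaussian.integrable_fun_id.eval i]
    simp [integral_eval]
  rw [L.integral_comp_id_comm IsGaussian.integrable_id, hmean, map_zero]

lemma integrable_dotProduct_pow_stdGaussianPi (a : ι → ℝ) (k : ℕ) :
    Integrable (fun z => (a ⬝ᵥ z) ^ k) (stdGaussianPi ι) := by
  have h := integrable_eval_gaussianReal 0 (∑ i, a i ^ 2).toNNReal (Polynomial.X ^ k)
  simp only [Polynomial.eval_pow, Polynomial.eval_X] at h
  rw [← map_dotProduct_stdGaussianPi] at h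
  exact h.comp_measurable (by fun_prop)

lemma integral_comp_dotProduct_stdGaussianPi (a : ι → ℝ) {f : ℝ → ℝ} (hf : Continuous f) :
    ∫ z, f (a ⬝ᵥ z) ∂(stdGaussianPi ι) = ∫ t, f t ∂(gaussianReal 0 (∑ i, a i ^ 2).toNNReal) := by
  rw [← map_dotProduct_stdGaussianPi, integral_map (by fun_prop) (by fun_prop)]

lemma integral_dotProduct_sq_stdGaussianPi (a : ι → ℝ) :
    ∫ z, (a ⬝ᵥ z) ^ 2 ∂(stdGaussianPi ι) = ∑ i, a i ^ 2 := by
  rw [integral_comp_dotProduct_stdGaussianPi a (f := (· ^ 2)) (by fun_prop),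
    integral_sq_gaussianReal, Real.coe_toNNReal _ (by positivity)]

lemma integral_dotProduct_pow_four_stdGaussianPi (a : ι → ℝ) :
    ∫ z, (a ⬝ᵥ z) ^ 4 ∂(stdGaussianPi ι) = 3 * (∑ i, a i ^ 2) ^ 2 := by
  rw [integral_comp_dotProduct_stdGaussianPi a (f := (· ^ 4)) (by fun_prop),
    integral_pow_four_gaussianReal, Real.coe_toNNReal _ (by positivity)]

lemma memLp_two_dotProduct_sq_stdGaussianPi (a : ι → ℝ) :
    MemLp (fun z => (a ⬝ᵥ z) ^ 2) 2 (stdGaussianPi ι) := by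
  rw [memLp_two_iff_integrable_sq (by fun_prop)]
  simpa only [← pow_mul] using integrable_dotProduct_pow_stdGaussianPi a 4

lemma memLp_two_sum_mulVec_sq_stdGaussianPi (A : Matrix κ ι ℝ) :
    MemLp (fun z => ∑ k, (A *ᵥ z) k ^ 2) 2 (stdGaussianPi ι) :=
  memLp_finsetSum _ fun k _ => memLp_two_dotProduct_sq_stdGaussianPi (A.row k)

lemma integral_sum_mulVec_sq_stdGaussianPi (A : Matrix κ ι ℝ) :
    ∫ z, ∑ k, (A *ᵥ z) k ^ 2 ∂(stdGaussianPi ι) = ∑ k, ∑ i, A k i ^ 2 :=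
  (integral_finsetSum _ fun k _ => integrable_dotProduct_pow_stdGaussianPi (A.row k) 2).trans <|
    Finset.sum_congr rfl fun k _ => integral_dotProduct_sq_stdGaussianPi (A.row k)

lemma integral_sum_mulVec_sq_sq_le_stdGaussianPi (A : Matrix κ ι ℝ) :
    ∫ z, (∑ k, (A *ᵥ z) k ^ 2) ^ 2 ∂(stdGaussianPi ι) ≤ 3 * (∑ k, ∑ i, A k i ^ 2) ^ 2 := by
  refine integral_sq_finsetSum_le (fun k _ => memLp_two_dotProduct_sq_stdGaussianPi (A.row k))
    zero_le_three (fun k _ => by positivity) fun k _ => ?_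
  simp only [← pow_mul]
  exact (integral_dotProduct_pow_four_stdGaussianPi (A.row k)).le

lemma measureReal_half_sum_mulVec_sq_lt_stdGaussianPi (A : Matrix κ ι ℝ)
    (hA : 0 < ∑ k, ∑ i, A k i ^ 2) :
    1 / 12 ≤ (stdGaussianPi ι).real {z | (∑ k, ∑ i, A k i ^ 2) / 2 < ∑ k, (A *ᵥ z) k ^ 2} := by
  have h := one_div_twelve_le_measureReal_half_integral_lt
    (memLp_two_sum_mulVec_sq_stdGaussianPi A)
  rw [integral_sum_mulVec_sq_stdGaussianPi] at h
  exact h hA (integral_sum_mulVec_sq_sq_le_stdGaussianPi A)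

lemma measureReal_half_sum_sq_lt_dotProduct_sq_stdGaussianPi (a : ι → ℝ)
    (ha : 0 < ∑ i, a i ^ 2) :
    1 / 12 ≤ (stdGaussianPi ι).real {z | (∑ i, a i ^ 2) / 2 < (a ⬝ᵥ z) ^ 2} := by
  simpa using! measureReal_half_sum_mulVec_sq_lt_stdGaussianPi (Matrix.replicateRow Unit a)
    (by simpa using ha)

/-- Conditionally on `z`, the chaos is Gaussian in `y` with variance `|A z|²`. -/
lemma bilinear_anticoncentration_stdGaussianPi (A : Matrix κ ι ℝ) (v : ι → ℝ) {B : ℝ}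
    (h : B ^ 2 * ∑ i, v i ^ 2 < ∑ k, ∑ i, A k i ^ 2) :
    ENNReal.ofReal (1 / 288) ≤ ((stdGaussianPi ι).prod (stdGaussianPi κ))
      {p | B * |v ⬝ᵥ p.1| < 10 * |(A *ᵥ p.1) ⬝ᵥ p.2|} := by
  have hA : 0 < ∑ k, ∑ i, A k i ^ 2 := h.trans_le' (by positivity)
  set S := {z : ι → ℝ | (∑ k, ∑ i, A k i ^ 2) / 2 < ∑ k, (A *ᵥ z) k ^ 2}
  set T := {z : ι → ℝ | 24 * ∑ i, v i ^ 2 < (v ⬝ᵥ z) ^ 2}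
  have hS : 1 / 12 ≤ (stdGaussianPi ι).real S :=
    measureReal_half_sum_mulVec_sq_lt_stdGaussianPi A hA
  have hT : (stdGaussianPi ι).real T ≤ 1 / 24 := by
    have hmarkov := measureReal_mul_integral_lt_le (μ := stdGaussianPi ι)
      (Z := fun z => (v ⬝ᵥ z) ^ 2) (fun z => sq_nonneg (v ⬝ᵥ z))
      (integrable_dotProduct_pow_stdGaussianPi v 2) (c := 24) (by norm_num)
    rwa [integral_dotProduct_sq_stdGaussianPi] at hmarkov
  have hG : 1 / 24 ≤ (stdGaussianPi ι).real (S \ T) := by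
    linarith [le_measureReal_sdiff (μ := stdGaussianPi ι) (s₁ := S) (s₂ := T)]
  have hslice (z : ι → ℝ) (hz : z ∈ S \ T) : ENNReal.ofReal (1 / 12) ≤
      stdGaussianPi κ {y | B * |v ⬝ᵥ z| < 10 * |(A *ᵥ z) ⬝ᵥ y|} := by
    obtain ⟨hAz, hvz⟩ := hz
    rw [Set.mem_ofPred_eq] at hAz hvz
    refine (ENNReal.ofReal_le_ofReal (measureReal_half_sum_sq_lt_dotProduct_sq_stdGaussianPi _
      (hAz.trans' (by linarith)))).trans ?_
    rw [ofReal_measureReal]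
    refine measure_mono fun y hy => ?_
    rw [Set.mem_ofPred_eq] at hy ⊢
    refine lt_of_pow_lt_pow_left₀ 2 (by positivity) ?_
    rw [mul_pow, mul_pow, sq_abs, sq_abs]
    nlinarith [mul_le_mul_of_nonneg_left (not_lt.1 hvz) (sq_nonneg B)]
  calc ENNReal.ofReal (1 / 288) = ENNReal.ofReal (1 / 12) * ENNReal.ofReal (1 / 24) := by
        rw [← ENNReal.ofReal_mul (by norm_num)]
        norm_num
    _ ≤ ENNReal.ofReal (1 / 12) * stdGaussianPi ι (S \ T) := by
        rw [← ofReal_measureReal (s := S \ T)]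
        gcongr
    _ ≤ _ := mul_measure_le_prod _ _ (measurableSet_lt (by fun_prop) (by fun_prop)) hslice

end StdGaussianPi

section Circle

lemma norm_eval_derivative_le {K : Type*} [NormedField K] [IsAlgClosed K] (P : Polynomial K)
    {z : K} {η : ℝ} (hη : 0 < η) (h : ∀ r ∈ P.roots, η ≤ ‖z - r‖) :
    ‖P.derivative.eval z‖ ≤ P.natDegree / η * ‖P.eval z‖ := by
  rcases eq_or_ne P 0 with rfl | hP
  · simp
  have hz : P.eval z ≠ 0 := fun hz => by
    have := h z ((Polynomial.mem_roots hP).2 hz)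
    rw [sub_self, norm_zero] at this
    linarith
  have hlog : ‖(P.roots.map fun r => 1 / (z - r)).sum‖ ≤ P.natDegree / η :=
    calc ‖(P.roots.map fun r => 1 / (z - r)).sum‖
        ≤ (P.roots.map fun r => ‖1 / (z - r)‖).sum := by
          simpa only [Multiset.map_map, Function.comp_def] using
            norm_multiset_sum_le (P.roots.map fun r => 1 / (z - r))
      _ ≤ (P.roots.map fun _ => 1 / η).sum := Multiset.sum_map_le_sum_map _ _ fun r hr => by
          rw [norm_div, norm_one]
          exact one_div_le_one_div_of_le hη (h r hr)
      _ = P.roots.card / η := by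
          rw [Multiset.map_const', Multiset.sum_replicate, nsmul_eq_mul, mul_one_div]
      _ ≤ P.natDegree / η := by
          gcongr
          exact P.card_roots'
  rw [(IsAlgClosed.splits P).eval_derivative_eq_eval_mul_sum hz, norm_mul, mul_comm]
  exact mul_le_mul_of_nonneg_right hlog (norm_nonneg _)

lemma abs_sub_le_mul_norm_exp_sub_exp {θ φ : ℝ} (h : |θ - φ| ≤ Real.pi) :
    |θ - φ| ≤
      Real.pi / 2 * ‖Complex.exp (Complex.I * θ) - Complex.exp (Complex.I * φ)‖ := by
  have hchord : Complex.exp (Complex.I * θ) - Complex.exp (Complex.I * φ) =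
      Complex.exp (Complex.I * φ) * (Complex.exp (Complex.I * (θ - φ : ℝ)) - 1) := by
    rw [mul_sub, ← Complex.exp_add]
    push_cast
    ring_nf
  have hsin := Real.mul_abs_le_abs_sin (x := (θ - φ) / 2) (by
    rw [abs_div, abs_two]
    linarith)
  rw [hchord, norm_mul, Complex.norm_exp_I_mul_ofReal, one_mul,
    Complex.norm_exp_I_mul_ofReal_sub_one, norm_mul, Real.norm_two, Real.norm_eq_abs]
  calc |θ - φ| = Real.pi * (2 / Real.pi * |(θ - φ) / 2|) := by
        rw [abs_div, abs_two]
        field_simp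
    _ ≤ Real.pi * |Real.sin ((θ - φ) / 2)| := by gcongr
    _ = _ := by ring

lemma volume_angles_near_le (r : ℂ) (η : ℝ) :
    volume {θ : ℝ | θ ∈ Set.Icc 0 1 ∧ ‖Complex.exp (Complex.I * θ) - r‖ < η} ≤
      ENNReal.ofReal (4 * η) := by
  refine (Real.volume_le_diam _).trans (Metric.ediam_le ?_)
  rintro θ ⟨hθ, hθr⟩ φ ⟨hφ, hφr⟩
  rw [edist_dist, Real.dist_eq]
  have hangle : |θ - φ| ≤ Real.pi := by
    linarith [abs_sub_le_of_le_of_le hθ.1 hθ.2 hφ.1 hφ.2, Real.pi_gt_three]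
  have hchord := norm_sub_le_norm_sub_add_norm_sub (Complex.exp (Complex.I * θ)) r
    (Complex.exp (Complex.I * φ))
  rw [norm_sub_rev r] at hchord
  refine ENNReal.ofReal_le_ofReal ((abs_sub_le_mul_norm_exp_sub_exp hangle).trans ?_)
  nlinarith [Real.pi_le_four,
    norm_nonneg (Complex.exp (Complex.I * θ) - Complex.exp (Complex.I * φ))]

/-- The function `F` equals the trigonometric polynomial `θ ↦ e^{-idθ} P(e^{iθ})` on the circle. -/
def IsTrigPolynomial (F : ℝ → ℝ) (d : ℕ) (P : Polynomial ℂ) : Prop :=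
  ∀ θ : ℝ, (F θ : ℂ) * Complex.exp (Complex.I * θ) ^ d = P.eval (Complex.exp (Complex.I * θ))

variable {F F' : ℝ → ℝ} {d : ℕ} {P : Polynomial ℂ}

lemma IsTrigPolynomial.norm_eval (hP : IsTrigPolynomial F d P) (θ : ℝ) :
    ‖P.eval (Complex.exp (Complex.I * θ))‖ = |F θ| := by
  rw [← hP θ, norm_mul, norm_pow, Complex.norm_exp_I_mul_ofReal, one_pow, mul_one,
    Complex.norm_real, Real.norm_eq_abs]

lemma IsTrigPolynomial.abs_deriv_le (hP : IsTrigPolynomial F d P) {θ f' : ℝ}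
    (hF : HasDerivAt F f' θ) :
    |f'| ≤ ‖P.derivative.eval (Complex.exp (Complex.I * θ))‖ + d * |F θ| := by
  set e := Complex.exp (Complex.I * θ)
  have he : ‖e‖ = 1 := Complex.norm_exp_I_mul_ofReal θ
  have hexp : HasDerivAt (fun t : ℝ => Complex.exp (Complex.I * t)) (e * Complex.I) θ := by
    simpa using ((hasDerivAt_id θ).ofReal_comp.const_mul Complex.I).cexp
  have hleft := (hF.ofReal_comp.fun_mul (hexp.fun_pow d)).congr_of_eventuallyEq
    (.of_forall fun s => (hP s).symm)
  have hright := (P.hasDerivAt e).comp θ hexp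
  have hderiv : (f' : ℂ) * e ^ d = P.derivative.eval e * (e * Complex.I) -
      (F θ : ℂ) * (d * e ^ (d - 1) * (e * Complex.I)) :=
    eq_sub_of_add_eq (hleft.unique hright)
  have hnorm := norm_sub_le (P.derivative.eval e * (e * Complex.I))
    ((F θ : ℂ) * (d * e ^ (d - 1) * (e * Complex.I)))
  rw [← hderiv] at hnorm
  simp only [norm_mul, norm_pow, he, Complex.norm_I, Complex.norm_real, one_pow, mul_one,
    Complex.norm_natCast, Real.norm_eq_abs] at hnorm
  linarith

lemma IsTrigPolynomial.volume_deriv_large_le (hP : IsTrigPolynomial F d P)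
    (hF : ∀ θ, HasDerivAt F (F' θ) θ) {η : ℝ} (hη : 0 < η) :
    volume {θ : ℝ | θ ∈ Set.Icc 0 1 ∧ (P.natDegree / η + d) * |F θ| < |F' θ|} ≤
      ENNReal.ofReal (P.natDegree * (4 * η)) := by
  have hroot : {θ : ℝ | θ ∈ Set.Icc 0 1 ∧ (P.natDegree / η + d) * |F θ| < |F' θ|} ⊆
      ⋃ r ∈ P.roots.toFinset,
        {θ : ℝ | θ ∈ Set.Icc 0 1 ∧ ‖Complex.exp (Complex.I * θ) - r‖ < η} := by
    rintro θ ⟨hθ, hlarge⟩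
    simp only [Set.mem_iUnion, Set.mem_ofPred_eq, Multiset.mem_toFinset, exists_prop]
    by_contra! hfar
    have hlog := norm_eval_derivative_le P hη fun r hr => hfar r hr hθ
    rw [hP.norm_eval] at hlog
    linarith [hP.abs_deriv_le (hF θ)]
  calc _ ≤ ∑ r ∈ P.roots.toFinset,
        volume {θ : ℝ | θ ∈ Set.Icc 0 1 ∧ ‖Complex.exp (Complex.I * θ) - r‖ < η} :=
        (measure_mono hroot).trans (measure_biUnion_finset_le _ _)
    _ ≤ P.roots.toFinset.card • ENNReal.ofReal (4 * η) :=
        Finset.sum_le_card_nsmul _ _ _ fun r _ => volume_angles_near_le r η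
    _ ≤ P.natDegree • ENNReal.ofReal (4 * η) := by
        gcongr
        exact (Multiset.toFinset_card_le _).trans P.card_roots'
    _ = ENNReal.ofReal (P.natDegree * (4 * η)) := by
        rw [nsmul_eq_mul, ← ENNReal.ofReal_natCast, ← ENNReal.ofReal_mul (by positivity)]

end Circle

section CircleRestriction

variable {σ : Type*} [Fintype σ]

/-- The polynomial whose value at `z = e^{iθ}` is `z * (a * cos θ + b * sin θ)`. -/
noncomputable def circleLinear (a b : ℝ) : Polynomial ℂ :=
  .C ((a - Complex.I * b) / 2) * .X ^ 2 + .C ((a + Complex.I * b) / 2)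

/-- The restriction of `f` to the circle `θ ↦ cos θ • x + sin θ • y`, as a polynomial in
`e^{iθ}`, multiplied by `e^{idθ}` to clear the negative powers. The exponent `d - m.degree` is
meaningful only when `f.totalDegree ≤ d`. -/
noncomputable def circleRestriction (f : MvPolynomial σ ℝ) (d : ℕ) (x y : σ → ℝ) :
    Polynomial ℂ :=
  ∑ m ∈ f.support, .C ((coeff m f : ℝ) : ℂ) *
    (.X ^ (d - m.degree) * ∏ i, circleLinear (x i) (y i) ^ m i)

lemma natDegree_circleLinear_le (a b : ℝ) : (circleLinear a b).natDegree ≤ 2 := by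
  rw [circleLinear]
  compute_degree

lemma eval_circleLinear (a b θ : ℝ) :
    (circleLinear a b).eval (Complex.exp (Complex.I * θ)) =
      Complex.exp (Complex.I * θ) * (Real.cos θ * a + Real.sin θ * b : ℝ) := by
  have hinv : Complex.exp (Complex.I * θ) * Complex.exp (-(Complex.I * θ)) = 1 := by
    rw [← Complex.exp_add, add_neg_cancel, Complex.exp_zero]
  simp only [circleLinear, Polynomial.eval_add, Polynomial.eval_mul, Polynomial.eval_C,
    Polynomial.eval_pow, Polynomial.eval_X, Complex.ofReal_add, Complex.ofReal_mul,
    Complex.ofReal_cos, Complex.ofReal_sin, Complex.cos, Complex.sin, neg_mul,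
    mul_comm (θ : ℂ) Complex.I]
  linear_combination (-(a + Complex.I * b) / 2) * hinv

variable {f : MvPolynomial σ ℝ} {d : ℕ}

lemma natDegree_circleRestriction_le (hf : f.totalDegree ≤ d) (x y : σ → ℝ) :
    (circleRestriction f d x y).natDegree ≤ 2 * d := by
  refine Polynomial.natDegree_sum_le_of_forall_le _ _ fun m hm => ?_
  have hmd : m.degree ≤ d := (le_totalDegree hm).trans hf
  have hprod : (∏ i, circleLinear (x i) (y i) ^ m i).natDegree ≤ m.degree * 2 := by
    rw [Finsupp.degree_eq_sum, Finset.sum_mul]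
    exact (Polynomial.natDegree_prod_le _ _).trans (Finset.sum_le_sum fun i _ =>
      Polynomial.natDegree_pow_le.trans (Nat.mul_le_mul_left _ (natDegree_circleLinear_le _ _)))
  refine (Polynomial.natDegree_C_mul_le _ _).trans (Polynomial.natDegree_mul_le.trans ?_)
  rw [Polynomial.natDegree_X_pow]
  lia

lemma isTrigPolynomial_circleRestriction (hf : f.totalDegree ≤ d) (x y : σ → ℝ) :
    IsTrigPolynomial (fun θ => eval (Real.cos θ • x + Real.sin θ • y) f) d
      (circleRestriction f d x y) := by
  intro θ
  beta_reduce
  rw [eval_eq', circleRestriction, Complex.ofReal_sum, Finset.sum_mul, Polynomial.eval_finsetSum]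
  refine Finset.sum_congr rfl fun m hm => ?_
  have hmd : m.degree ≤ d := (le_totalDegree hm).trans hf
  rw [Polynomial.eval_mul, Polynomial.eval_C, Polynomial.eval_mul, Polynomial.eval_pow,
    Polynomial.eval_X, Polynomial.eval_prod]
  simp only [Polynomial.eval_pow, eval_circleLinear, mul_pow, Finset.prod_mul_distrib,
    Finset.prod_pow_eq_pow_sum, ← Finsupp.degree_eq_sum]
  nth_rewrite 1 [← Nat.sub_add_cancel hmd]
  simp only [Pi.add_apply, Pi.smul_apply, smul_eq_mul]
  push_cast
  ring

/-- The gradient of the polynomial `f` at the point `x`. -/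
noncomputable def evalGradient {R : Type*} [CommSemiring R] (f : MvPolynomial σ R) (x : σ → R) :
    σ → R :=
  fun i => eval x (pderiv i f)

lemma hasDerivAt_eval_comp {𝕜 : Type*} [NontriviallyNormedField 𝕜] (f : MvPolynomial σ 𝕜)
    {c : 𝕜 → σ → 𝕜} {c' : σ → 𝕜} {t : 𝕜} (hc : HasDerivAt c c' t) :
    HasDerivAt (fun s => eval (c s) f) (evalGradient f (c t) ⬝ᵥ c') t := by
  simp only [dotProduct, evalGradient]
  induction f using MvPolynomial.induction_on with
  | C r => simpa using hasDerivAt_const t r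
  | add p q hp hq => simpa [add_mul, Finset.sum_add_distrib] using hp.fun_add hq
  | mul_X p i hp =>
    simp only [eval_mul, eval_X]
    refine (hp.fun_mul (hasDerivAt_pi.1 hc i)).congr_deriv (Eq.symm ?_)
    simp only [pderiv_mul, map_add, map_mul, eval_X, add_mul, Finset.sum_add_distrib,
      Finset.sum_mul]
    congr 1
    · exact Finset.sum_congr rfl fun j _ => by ring
    · rw [Finset.sum_eq_single i] <;> simp +contextual [Ne.symm]

lemma volume_circle_derivative_large_le (hf : f.totalDegree ≤ d) (hd : 1 ≤ d) (x y : σ → ℝ)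
    {M : ℝ} (hM : 3 * d ≤ M) :
    volume {θ : ℝ | θ ∈ Set.Icc 0 1 ∧ M * |eval (Real.cos θ • x + Real.sin θ • y) f| <
      |evalGradient f (Real.cos θ • x + Real.sin θ • y) ⬝ᵥ
        (-Real.sin θ • x + Real.cos θ • y)|} ≤ ENNReal.ofReal (24 * d ^ 2 / M) := by
  have hd0 : (0 : ℝ) < d := by exact_mod_cast hd
  have hM0 : 0 < M := by linarith
  have hdeg : ((circleRestriction f d x y).natDegree : ℝ) ≤ 2 * d := by
    exact_mod_cast natDegree_circleRestriction_le hf x y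
  have hlog : (circleRestriction f d x y).natDegree / (3 * d / M) + d ≤ M := by
    calc _ ≤ 2 * d / (3 * d / M) + d := by gcongr
      _ = 2 / 3 * M + d := by field_simp
      _ ≤ M := by linarith
  refine (measure_mono ?_).trans (((isTrigPolynomial_circleRestriction hf x y).volume_deriv_large_le
    (fun θ => hasDerivAt_eval_comp f (((Real.hasDerivAt_cos θ).smul_const x).fun_add
      ((Real.hasDerivAt_sin θ).smul_const y))) (η := 3 * d / M) (by positivity)).trans ?_)
  · exact fun θ hθ => ⟨hθ.1, (mul_le_mul_of_nonneg_right hlog (abs_nonneg _)).trans_lt hθ.2⟩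
  · refine ENNReal.ofReal_le_ofReal ?_
    calc _ ≤ 2 * d * (4 * (3 * d / M)) := by gcongr
      _ = 24 * d ^ 2 / M := by ring

end CircleRestriction

section RelativeAnticoncentration

open scoped Matrix

variable {R σ J : Type*} [CommSemiring R] [Fintype J] {d : ℕ}

lemma eval_sum_C_mul (f : J → MvPolynomial σ R) (x : σ → R) (z : J → R) :
    eval x (∑ j, C (z j) * f j) = (fun j => eval x (f j)) ⬝ᵥ z := by
  simp [dotProduct, mul_comm]

lemma evalGradient_sum_C_mul (f : J → MvPolynomial σ R) (x : σ → R) (z : J → R) :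
    evalGradient (∑ j, C (z j) * f j) x =
      (Matrix.of fun i j => eval x (pderiv i (f j))) *ᵥ z := by
  ext i
  simp [evalGradient, Matrix.mulVec, dotProduct, mul_comm]

lemma continuous_evalGradient (f : MvPolynomial σ ℝ) : Continuous (evalGradient f) :=
  continuous_pi fun i => continuous_eval (pderiv i f)

variable [Fintype σ]

lemma measure_derivative_large_le {f : MvPolynomial σ ℝ} (hf : f.totalDegree ≤ d) (hd : 1 ≤ d)
    {M : ℝ} (hM : 0 < M) :
    ((stdGaussianPi σ).prod (stdGaussianPi σ))
      {p | M * |eval p.1 f| < |evalGradient f p.1 ⬝ᵥ p.2|} ≤ ENNReal.ofReal (24 * d ^ 2 / M) := by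
  rcases lt_or_ge M (3 * d) with hlt | hge
  · have hd' : (1 : ℝ) ≤ d := by exact_mod_cast hd
    refine prob_le_one.trans (ENNReal.one_le_ofReal.2 ?_)
    rw [one_le_div hM]
    nlinarith
  have hS : MeasurableSet {p : (σ → ℝ) × (σ → ℝ) |
      M * |eval p.1 f| < |evalGradient f p.1 ⬝ᵥ p.2|} := by
    have hf := continuous_eval f
    have hgrad := continuous_evalGradient f
    exact measurableSet_lt (by fun_prop) (by fun_prop)
  have hvol : IsProbabilityMeasure ((volume : Measure ℝ).restrict (Set.Icc 0 1)) := ⟨by simp⟩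
  refine measure_le_of_forall_measure_orbit_le (volume.restrict (Set.Icc 0 1))
    (T := fun θ => ContinuousLinearMap.rotation θ) ?_ map_rotation_stdGaussianPi hS fun p => ?_
  · simp only [Function.uncurry_def, ContinuousLinearMap.rotation_apply]
    fun_prop
  · rw [Measure.restrict_apply' measurableSet_Icc]
    refine (measure_mono ?_).trans (volume_circle_derivative_large_le hf hd p.1 p.2 hge)
    exact fun θ hθ => hθ.symm

/-- Both sums of squares are tested against independent Gaussians `z` and `y`: `∑ j, z j * f j`
is again a polynomial of degree at most `d`, and its derivative along `y` is a bilinear chaos. -/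
lemma measure_gradient_large_le {f : J → MvPolynomial σ ℝ} (hf : ∀ j, (f j).totalDegree ≤ d)
    (hd : 1 ≤ d) {B : ℝ} (hB : 0 < B) :
    stdGaussianPi σ
      {x | B ^ 2 * ∑ j, eval x (f j) ^ 2 < ∑ j, ∑ i, eval x (pderiv i (f j)) ^ 2} ≤
      ENNReal.ofReal (69120 * d ^ 2 / B) := by
  set S : Set ((σ → ℝ) × (J → ℝ) × (σ → ℝ)) := {q |
    B * |eval q.1 (∑ j, C (q.2.1 j) * f j)| <
      10 * |evalGradient (∑ j, C (q.2.1 j) * f j) q.1 ⬝ᵥ q.2.2|}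
  have hS : MeasurableSet S := by
    have hf (j : J) := continuous_eval (f j)
    have hgrad (i : σ) (j : J) := continuous_eval (pderiv i (f j))
    simp only [S, eval_sum_C_mul, evalGradient_sum_C_mul]
    exact measurableSet_lt (by fun_prop) (by fun_prop)
  have hlower := mul_measure_le_prod (stdGaussianPi σ)
    ((stdGaussianPi J).prod (stdGaussianPi σ)) hS (c := ENNReal.ofReal (1 / 288))
    (G := {x | B ^ 2 * ∑ j, eval x (f j) ^ 2 < ∑ j, ∑ i, eval x (pderiv i (f j)) ^ 2})
    fun x hx => by
      rw [Set.mem_ofPred_eq, Finset.sum_comm] at hx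
      simp only [S, eval_sum_C_mul, evalGradient_sum_C_mul]
      exact bilinear_anticoncentration_stdGaussianPi _ _ hx
  have hupper : ((stdGaussianPi σ).prod ((stdGaussianPi J).prod (stdGaussianPi σ))) S ≤
      ENNReal.ofReal (24 * d ^ 2 / (B / 10)) := by
    refine prod_prod_le_of_forall_prod_le _ _ _ hS fun z => ?_
    have hdeg : (∑ j, C (z j) * f j).totalDegree ≤ d :=
      totalDegree_finsetSum_le fun j _ => (totalDegree_mul _ _).trans (by simpa using hf j)
    refine (measure_mono fun p hp => ?_).trans (measure_derivative_large_le hdeg hd (by positivity))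
    rw [Set.mem_ofPred_eq] at hp ⊢
    simp only [S, Set.mem_ofPred_eq] at hp
    linarith
  rw [show 24 * d ^ 2 / (B / 10) = 1 / 288 * (69120 * d ^ 2 / B) by field_simp; norm_num,
    ENNReal.ofReal_mul (by norm_num)] at hupper
  exact (ENNReal.mul_le_mul_iff_right (by simp) ENNReal.ofReal_ne_top).1 (hlower.trans hupper)

end RelativeAnticoncentration

section Attenuation

lemma geom_sum_le_two {ρ : ℝ} (h0 : 0 ≤ ρ) (h : ρ ≤ 1 / 2) (d : ℕ) :
    ∑ k ∈ Finset.range d, ρ ^ k ≤ 2 := by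
  have hlt : ρ < 1 := by linarith
  calc ∑ k ∈ Finset.range d, ρ ^ k ≤ ∑' k, ρ ^ k :=
        (summable_geometric_of_lt_one h0 hlt).sum_le_tsum _ fun k _ => pow_nonneg h0 k
    _ = (1 - ρ)⁻¹ := tsum_geometric_of_lt_one h0 hlt
    _ ≤ 2 := by
        rw [inv_le_comm₀ (by linarith) (by norm_num)]
        linarith

lemma sum_pow_mul_le_of_geometric {V : ℕ → ℝ} {d : ℕ} {r ρ : ℝ} (hr : 0 ≤ r) (hρ0 : 0 ≤ ρ)
    (hρ : ρ ≤ 1 / 2) (hV : 0 ≤ V 0) (h : ∀ k < d, r * V (k + 1) ≤ ρ * V k) :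
    ∑ k ∈ Finset.range d, r ^ (k + 1) * V (k + 1) ≤ 2 * ρ * V 0 := by
  have hdecay (k : ℕ) (hk : k ≤ d) : r ^ k * V k ≤ ρ ^ k * V 0 := by
    induction k with
    | zero => simp
    | succ k ih =>
      calc r ^ (k + 1) * V (k + 1) = r ^ k * (r * V (k + 1)) := by ring
        _ ≤ r ^ k * (ρ * V k) := mul_le_mul_of_nonneg_left (h k hk) (pow_nonneg hr k)
        _ = ρ * (r ^ k * V k) := by ring
        _ ≤ ρ * (ρ ^ k * V 0) := mul_le_mul_of_nonneg_left (ih (Nat.le_of_succ_le hk)) hρ0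
        _ = ρ ^ (k + 1) * V 0 := by ring
  calc ∑ k ∈ Finset.range d, r ^ (k + 1) * V (k + 1)
      ≤ ∑ k ∈ Finset.range d, ρ ^ (k + 1) * V 0 :=
        Finset.sum_le_sum fun k hk => hdecay (k + 1) (Finset.mem_range.1 hk)
    _ = (∑ k ∈ Finset.range d, ρ ^ k) * (ρ * V 0) := by
        rw [Finset.sum_mul]
        exact Finset.sum_congr rfl fun k _ => by ring
    _ ≤ 2 * (ρ * V 0) := by
        gcongr
        exact geom_sum_le_two hρ0 hρ d
    _ = 2 * ρ * V 0 := by ring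

variable {n d : ℕ} {g : MvPolynomial (Fin n) ℝ} {lam B : ℝ}

lemma hyperVar_le_of_forall_hermiteWeight_succ_le (hg : g.totalDegree ≤ d) {R ρ : ℝ}
    (hρ0 : 0 ≤ ρ) (hρ : ρ ≤ 1 / 2)
    (h : ∀ k < d, R ^ 2 * hermiteWeight g (k + 1) ≤ ρ * hermiteWeight g k) :
    hyperVar R g ≤ 2 * ρ * norm2sq g := by
  rw [hyperVar_eq_sum_hermiteWeight hg]
  simp only [pow_mul]
  exact (sum_pow_mul_le_of_geometric (sq_nonneg R) hρ0 hρ (hermiteWeight_nonneg g 0) h).trans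
    (mul_le_mul_of_nonneg_left (hermiteWeight_zero_le_norm2sq g) (by positivity))

lemma measure_hermiteWeight_zoom_succ_large_le (hg : g.totalDegree ≤ d) (hd : 1 ≤ d)
    (h0 : 0 ≤ lam) (h1 : lam ≤ 1) (hB : 0 < B) (k : ℕ) :
    gaussianN n {x | lam * B ^ 2 * hermiteWeight (zoom g lam x) k <
      (1 - lam) * hermiteWeight (zoom g lam x) (k + 1)} ≤ ENNReal.ofReal (69120 * d ^ 2 / B) := by
  refine (measure_mono fun x hx => ?_).trans (measure_gradient_large_le
    (f := fun α : Finset.piAntidiag (Finset.univ : Finset (Fin n)) k => zoomCoeff g lam α)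
    (fun α => (totalDegree_zoomCoeff_le g lam α).trans hg) hd hB)
  rw [Set.mem_ofPred_eq] at hx ⊢
  have hgrad := hx.trans_le (one_sub_mul_hermiteWeight_zoom_succ_le g h0 h1 x k)
  rw [mul_assoc] at hgrad
  simp only [eval_zoomCoeff]
  rw [Finset.sum_coe_sort _ fun α => hermiteCoeff (zoom g lam x) α ^ 2,
    Finset.sum_coe_sort _ fun α => ∑ i, eval x (pderiv i (zoomCoeff g lam α)) ^ 2]
  exact lt_of_mul_lt_mul_left hgrad h0

lemma measure_hyperVar_zoom_large_le (hg : g.totalDegree ≤ d) (hd : 1 ≤ d) (h0 : 0 ≤ lam)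
    (h1 : lam ≤ 1 / 2) (hB : 0 < B) {R : ℝ} (hR : 4 * lam * R ^ 2 * B ^ 2 ≤ 1) :
    gaussianN n
      {x | 4 * lam * R ^ 2 * B ^ 2 * norm2sq (zoom g lam x) < hyperVar R (zoom g lam x)} ≤
      ENNReal.ofReal (69120 * d ^ 3 / B) := by
  set bad : ℕ → Set (Fin n → ℝ) := fun k => {x | lam * B ^ 2 * hermiteWeight (zoom g lam x) k <
    (1 - lam) * hermiteWeight (zoom g lam x) (k + 1)}
  have hcover : {x | 4 * lam * R ^ 2 * B ^ 2 * norm2sq (zoom g lam x) <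
      hyperVar R (zoom g lam x)} ⊆ ⋃ k ∈ Finset.range d, bad k := by
    intro x hx
    by_contra hgood
    simp only [bad, Set.mem_iUnion, Finset.mem_range, Set.mem_ofPred_eq, exists_prop, not_exists,
      not_and, not_lt] at hgood
    have hatt := hyperVar_le_of_forall_hermiteWeight_succ_le
      ((totalDegree_zoom_le g lam x).trans hg) (R := R)
      (ρ := 2 * lam * R ^ 2 * B ^ 2) (by positivity) (by linarith) fun k hk => by
        have hhalf := mul_le_mul_of_nonneg_right h1 (hermiteWeight_nonneg (zoom g lam x) (k + 1))
        have hlevel : hermiteWeight (zoom g lam x) (k + 1) ≤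
            2 * lam * B ^ 2 * hermiteWeight (zoom g lam x) k := by linarith [hgood k hk]
        exact (mul_le_mul_of_nonneg_left hlevel (sq_nonneg R)).trans_eq (by ring)
    exact hx.not_ge (hatt.trans_eq (by ring))
  calc _ ≤ ∑ k ∈ Finset.range d, gaussianN n (bad k) :=
        (measure_mono hcover).trans (measure_biUnion_finset_le _ _)
    _ ≤ ∑ _k ∈ Finset.range d, ENNReal.ofReal (69120 * d ^ 2 / B) := Finset.sum_le_sum fun k _ =>
        measure_hermiteWeight_zoom_succ_large_le hg hd h0 (by linarith) hB k
    _ = ENNReal.ofReal (69120 * d ^ 3 / B) := by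
        rw [Finset.sum_const, Finset.card_range, nsmul_eq_mul, ← ENNReal.ofReal_natCast,
          ← ENNReal.ofReal_mul (by positivity)]
        congr 1
        ring

theorem local_hyperconcentration_single_general (hg : g.totalDegree ≤ d) (hd : 1 ≤ d)
    {R ε β : ℝ} (hR : 1 ≤ R) (hε : ε ≤ 1) (hβ : 0 < β) (hβ1 : β ≤ 1) (h0 : 0 ≤ lam)
    (hlam : lam ≤ ε / R ^ 2 * (β / (138240 * d ^ 3)) ^ 2) :
    gaussianN n {x | ¬ (hyperVar R (zoom g lam x) ≤ ε * norm2sq (zoom g lam x))} ≤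
      ENNReal.ofReal β := by
  have hd1 : (1 : ℝ) ≤ d ^ 3 := one_le_pow₀ (by exact_mod_cast hd)
  set B : ℝ := 69120 * d ^ 3 / β with hBdef
  have hB : 1 ≤ B := by
    rw [hBdef, one_le_div hβ]
    linarith
  have hscale : 4 * lam * R ^ 2 * B ^ 2 ≤ ε := by
    calc 4 * lam * R ^ 2 * B ^ 2
        ≤ 4 * (ε / R ^ 2 * (β / (138240 * d ^ 3)) ^ 2) * R ^ 2 * B ^ 2 := by gcongr
      _ = ε := by
        rw [hBdef]
        field_simp
        ring
  have hhalf : lam ≤ 1 / 2 := by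
    have hRB : 1 ≤ R ^ 2 * B ^ 2 := one_le_mul_of_one_le_of_one_le (one_le_pow₀ hR) (one_le_pow₀ hB)
    nlinarith
  have hmain := measure_hyperVar_zoom_large_le hg hd h0 hhalf (by positivity) (hscale.trans hε)
  rw [show 69120 * d ^ 3 / B = β by rw [hBdef]; field_simp] at hmain
  refine (measure_mono fun x hx => ?_).trans hmain
  have hnorm : 0 ≤ norm2sq (zoom g lam x) := integral_nonneg fun y => sq_nonneg _
  exact (mul_le_mul_of_nonneg_right hscale hnorm).trans_lt (not_le.1 hx)

end Attenuation

section Scale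

lemma rpow_log_le_pow {q t : ℝ} (hq0 : 0 < q) (hq1 : q ≤ 1) (ht : 2 ≤ t) (k : ℕ) :
    q ^ (k / Real.log 2 * Real.log t) ≤ q ^ k := by
  rw [← Real.rpow_natCast]
  refine Real.rpow_le_rpow_of_exponent_ge hq0 hq1 ?_
  rw [div_mul_eq_mul_div, le_div_iff₀ (Real.log_pos one_lt_two)]
  gcongr

lemma div_rpow_log_le_sq {β t : ℝ} (hβ : 0 < β) (hβ1 : β ≤ 1) (ht : 2 ≤ t) :
    (β / t) ^ (42 / Real.log 2 * Real.log t) ≤ (β / (138240 * t ^ 3)) ^ 2 := by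
  have hq : β / t ≤ 1 / 2 := by
    rw [div_le_div_iff₀ (by linarith) two_pos]
    linarith
  calc (β / t) ^ (42 / Real.log 2 * Real.log t)
      ≤ (β / t) ^ 42 := rpow_log_le_pow (by positivity) (by linarith) ht 42
    _ = (β / t) ^ 36 * (β ^ 6 / t ^ 6) := by rw [← div_pow, ← pow_add]
    _ ≤ (1 / 2) ^ 36 * (β ^ 2 / t ^ 6) := by
        have hβ6 : β ^ 6 ≤ β ^ 2 := pow_le_pow_of_le_one hβ.le hβ1 (by norm_num)
        gcongr
    _ ≤ (1 / 138240) ^ 2 * (β ^ 2 / t ^ 6) := by gcongr ?_ * _; norm_num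
    _ = (β / (138240 * t ^ 3)) ^ 2 := by field_simp

end Scale

/-- Local hyperconcentration theorem for a single polynomial: there is a universal
constant `C` such that for a degree-`d` polynomial `g` (`d ≥ 2`), `R ≥ 1`, `0 < ε ≤ 1`,
`0 < β < 1`, and `0 ≤ λ ≤ (ε/R²)·(β/d)^{C·log d}`, for `x ∼ N(0,1)^n`, except with
probability at most `β`, the zoom `g_{λ|x}` is `(R,ε)`-attenuated, i.e.
`HyperVar_R[g_{λ|x}] ≤ ε·‖g_{λ|x}‖₂²`. -/
theorem local_hyperconcentration_single :
    ∃ C : ℝ, ∀ (n d : ℕ), 2 ≤ d →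
      ∀ g : MvPolynomial (Fin n) ℝ, g.totalDegree ≤ d →
      ∀ R ε β lam : ℝ, 1 ≤ R → 0 < ε → ε ≤ 1 → 0 < β → β < 1 →
      0 ≤ lam → lam ≤ (ε / R ^ 2) * (β / d) ^ (C * Real.log d) →
      gaussianN n {x | ¬ (hyperVar R (zoom g lam x) ≤ ε * norm2sq (zoom g lam x))} ≤
        ENNReal.ofReal β := by
  refine ⟨42 / Real.log 2, fun n d hd g hg R ε β lam hR hε hε1 hβ hβ1 h0 hlam =>
    local_hyperconcentration_single_general hg (by lia) hR hε1 hβ hβ1.le h0 (hlam.trans ?_)⟩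
  gcongr
  exact div_rpow_log_le_sq hβ hβ1.le (by exact_mod_cast hd)
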